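/- arXiv:2507.01345 — 2 statements merged into one kernel-verified Lean document; each statement's English description precedes it below -/
import Mathlib

section
/- Let μ₁, μ₂, μ₃ : ℂ³ → ℝ be as defined. Then all pairwise Poisson brackets vanish: {μ_j, μ_k} = 0 for all j, k ∈ {1, 2, 3}, where for smooth f, g : ℂ³ → ℝ the Poisson bracket is {f, g} := Σ_{k=1}^{3} (∂f/∂x_k · ∂g/∂y_k − ∂f/∂y_k · ∂g/∂x_k) in the real coordinates z_k = x_k + i y_k on ℂ³ ≅ ℝ⁶. -/
open Real

/-- Partial derivative `∂f/∂x_k` of `f : ℝ³ × ℝ³ → ℝ` in the real coordinates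
`(x₁, x₂, x₃, y₁, y₂, y₃)` on `ℂ³ ≅ ℝ⁶`. -/
noncomputable def pdx (f : (Fin 3 → ℝ) → (Fin 3 → ℝ) → ℝ) (k : Fin 3)
    (x y : Fin 3 → ℝ) : ℝ :=
  deriv (fun t => f (Function.update x k t) y) (x k)

/-- Partial derivative `∂f/∂y_k`. -/
noncomputable def pdy (f : (Fin 3 → ℝ) → (Fin 3 → ℝ) → ℝ) (k : Fin 3)
    (x y : Fin 3 → ℝ) : ℝ :=
  deriv (fun t => f x (Function.update y k t)) (y k)

/-- The Poisson bracket `{f,g} = Σ_k (∂f/∂x_k·∂g/∂y_k − ∂f/∂y_k·∂g/∂x_k)`. -/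
noncomputable def poisson (f g : (Fin 3 → ℝ) → (Fin 3 → ℝ) → ℝ)
    (x y : Fin 3 → ℝ) : ℝ :=
  ∑ k, (pdx f k x y * pdy g k x y - pdy f k x y * pdx g k x y)

/-- The functions `μ₁, μ₂, μ₃ : ℂ³ → ℝ` (in real coordinates `z_j = x_j + i y_j`):
`μ₁ = x₃ − (x₁² + y₁²)/2`, `μ₂ = x₃ − (x₂² + y₂²)/2`,
`μ₃ = Im(z₁z₂e^{z₃}) = e^{x₃}[(x₁y₂ + x₂y₁)cos y₃ + (x₁x₂ − y₁y₂)sin y₃]`. -/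
noncomputable def mu : Fin 3 → (Fin 3 → ℝ) → (Fin 3 → ℝ) → ℝ :=
  ![fun x y => x 2 - (x 0 ^ 2 + y 0 ^ 2) / 2,
    fun x y => x 2 - (x 1 ^ 2 + y 1 ^ 2) / 2,
    fun x y => Real.exp (x 2) *
      ((x 0 * y 1 + x 1 * y 0) * Real.cos (y 2) + (x 0 * x 1 - y 0 * y 1) * Real.sin (y 2))]


theorem der_lin (a b : ℝ) (f : ℝ → ℝ) (t : ℝ) (h : ∀ s, f s = a * s + b) : deriv f t = a := by
  have : f = fun s => a * s + b := funext h
  rw [this]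
  simpa using (((hasDerivAt_id t).const_mul a).add_const b).deriv

theorem der_quad (b : ℝ) (f : ℝ → ℝ) (t : ℝ) (h : ∀ s, f s = b - s ^ 2 / 2) :
    deriv f t = -t := by
  have : f = fun s => b - s ^ 2 / 2 := funext h
  rw [this]
  have := ((((hasDerivAt_id t).pow 2).div_const 2).const_sub b).deriv
  simpa using this

theorem der_exp (a : ℝ) (f : ℝ → ℝ) (t : ℝ) (h : ∀ s, f s = Real.exp s * a) :
    deriv f t = Real.exp t * a := by
  have : f = fun s => Real.exp s * a := funext h
  rw [this]
  exact ((Real.hasDerivAt_exp t).mul_const a).deriv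

theorem der_trig (c a b : ℝ) (f : ℝ → ℝ) (t : ℝ)
    (h : ∀ s, f s = c * (a * Real.cos s + b * Real.sin s)) :
    deriv f t = c * (a * -Real.sin t + b * Real.cos t) := by
  have : f = fun s => c * (a * Real.cos s + b * Real.sin s) := funext h
  rw [this]
  exact ((((Real.hasDerivAt_cos t).const_mul a).add
    ((Real.hasDerivAt_sin t).const_mul b)).const_mul c).deriv

theorem pdx_0_0 (x y : Fin 3 → ℝ) : pdx (mu 0) 0 x y = -(x 0) := by
  unfold pdx
  refine der_quad (x 2 - (y 0 ^ 2) / 2) _ _ ?_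
  intro s
  simp [mu, Function.update]
  try ring

theorem pdy_0_0 (x y : Fin 3 → ℝ) : pdy (mu 0) 0 x y = -(y 0) := by
  unfold pdy
  refine der_quad (x 2 - (x 0 ^ 2) / 2) _ _ ?_
  intro s
  simp [mu, Function.update]
  try ring

theorem pdx_0_1 (x y : Fin 3 → ℝ) : pdx (mu 0) 1 x y = 0 := by
  unfold pdx
  refine der_lin 0 (x 2 - (x 0 ^ 2 + y 0 ^ 2) / 2) _ _ ?_
  intro s
  simp [mu, Function.update]
  try ring

theorem pdy_0_1 (x y : Fin 3 → ℝ) : pdy (mu 0) 1 x y = 0 := by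
  unfold pdy
  refine der_lin 0 (x 2 - (x 0 ^ 2 + y 0 ^ 2) / 2) _ _ ?_
  intro s
  simp [mu, Function.update]
  try ring

theorem pdx_0_2 (x y : Fin 3 → ℝ) : pdx (mu 0) 2 x y = 1 := by
  unfold pdx
  refine der_lin 1 (-((x 0 ^ 2 + y 0 ^ 2) / 2)) _ _ ?_
  intro s
  simp [mu, Function.update]
  try ring

theorem pdy_0_2 (x y : Fin 3 → ℝ) : pdy (mu 0) 2 x y = 0 := by
  unfold pdy
  refine der_lin 0 (x 2 - (x 0 ^ 2 + y 0 ^ 2) / 2) _ _ ?_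
  intro s
  simp [mu, Function.update]
  try ring

theorem pdx_1_0 (x y : Fin 3 → ℝ) : pdx (mu 1) 0 x y = 0 := by
  unfold pdx
  refine der_lin 0 (x 2 - (x 1 ^ 2 + y 1 ^ 2) / 2) _ _ ?_
  intro s
  simp [mu, Function.update]
  try ring

theorem pdy_1_0 (x y : Fin 3 → ℝ) : pdy (mu 1) 0 x y = 0 := by
  unfold pdy
  refine der_lin 0 (x 2 - (x 1 ^ 2 + y 1 ^ 2) / 2) _ _ ?_
  intro s
  simp [mu, Function.update]
  try ring

theorem pdx_1_1 (x y : Fin 3 → ℝ) : pdx (mu 1) 1 x y = -(x 1) := by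
  unfold pdx
  refine der_quad (x 2 - (y 1 ^ 2) / 2) _ _ ?_
  intro s
  simp [mu, Function.update]
  try ring

theorem pdy_1_1 (x y : Fin 3 → ℝ) : pdy (mu 1) 1 x y = -(y 1) := by
  unfold pdy
  refine der_quad (x 2 - (x 1 ^ 2) / 2) _ _ ?_
  intro s
  simp [mu, Function.update]
  try ring

theorem pdx_1_2 (x y : Fin 3 → ℝ) : pdx (mu 1) 2 x y = 1 := by
  unfold pdx
  refine der_lin 1 (-((x 1 ^ 2 + y 1 ^ 2) / 2)) _ _ ?_
  intro s
  simp [mu, Function.update]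
  try ring

theorem pdy_1_2 (x y : Fin 3 → ℝ) : pdy (mu 1) 2 x y = 0 := by
  unfold pdy
  refine der_lin 0 (x 2 - (x 1 ^ 2 + y 1 ^ 2) / 2) _ _ ?_
  intro s
  simp [mu, Function.update]
  try ring

theorem pdx_2_0 (x y : Fin 3 → ℝ) : pdx (mu 2) 0 x y = Real.exp (x 2) * (y 1 * Real.cos (y 2) + x 1 * Real.sin (y 2)) := by
  unfold pdx
  refine der_lin (Real.exp (x 2) * (y 1 * Real.cos (y 2) + x 1 * Real.sin (y 2))) (Real.exp (x 2) * (x 1 * y 0 * Real.cos (y 2) - y 0 * y 1 * Real.sin (y 2))) _ _ ?_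
  intro s
  simp [mu, Function.update]
  try ring

theorem pdx_2_1 (x y : Fin 3 → ℝ) : pdx (mu 2) 1 x y = Real.exp (x 2) * (y 0 * Real.cos (y 2) + x 0 * Real.sin (y 2)) := by
  unfold pdx
  refine der_lin (Real.exp (x 2) * (y 0 * Real.cos (y 2) + x 0 * Real.sin (y 2))) (Real.exp (x 2) * (x 0 * y 1 * Real.cos (y 2) - y 0 * y 1 * Real.sin (y 2))) _ _ ?_
  intro s
  simp [mu, Function.update]
  try ring

theorem pdy_2_0 (x y : Fin 3 → ℝ) : pdy (mu 2) 0 x y = Real.exp (x 2) * (x 1 * Real.cos (y 2) - y 1 * Real.sin (y 2)) := by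
  unfold pdy
  refine der_lin (Real.exp (x 2) * (x 1 * Real.cos (y 2) - y 1 * Real.sin (y 2))) (Real.exp (x 2) * (x 0 * y 1 * Real.cos (y 2) + x 0 * x 1 * Real.sin (y 2))) _ _ ?_
  intro s
  simp [mu, Function.update]
  try ring

theorem pdy_2_1 (x y : Fin 3 → ℝ) : pdy (mu 2) 1 x y = Real.exp (x 2) * (x 0 * Real.cos (y 2) - y 0 * Real.sin (y 2)) := by
  unfold pdy
  refine der_lin (Real.exp (x 2) * (x 0 * Real.cos (y 2) - y 0 * Real.sin (y 2))) (Real.exp (x 2) * (x 1 * y 0 * Real.cos (y 2) + x 0 * x 1 * Real.sin (y 2))) _ _ ?_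
  intro s
  simp [mu, Function.update]
  try ring

theorem pdx_2_2 (x y : Fin 3 → ℝ) : pdx (mu 2) 2 x y = Real.exp (x 2) * ((x 0 * y 1 + x 1 * y 0) * Real.cos (y 2) + (x 0 * x 1 - y 0 * y 1) * Real.sin (y 2)) := by
  unfold pdx
  refine der_exp ((x 0 * y 1 + x 1 * y 0) * Real.cos (y 2) + (x 0 * x 1 - y 0 * y 1) * Real.sin (y 2)) _ _ ?_
  intro s
  simp [mu, Function.update]
  try ring

theorem pdy_2_2 (x y : Fin 3 → ℝ) : pdy (mu 2) 2 x y = Real.exp (x 2) * ((x 0 * y 1 + x 1 * y 0) * -Real.sin (y 2) + (x 0 * x 1 - y 0 * y 1) * Real.cos (y 2)) := by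
  unfold pdy
  refine der_trig (Real.exp (x 2)) (x 0 * y 1 + x 1 * y 0) (x 0 * x 1 - y 0 * y 1) _ _ ?_
  intro s
  simp [mu, Function.update]
  try ring

/-- All pairwise Poisson brackets of `μ₁, μ₂, μ₃` vanish. -/
theorem poisson_brackets_vanish (x y : Fin 3 → ℝ) (j k : Fin 3) :
    poisson (mu j) (mu k) x y = 0 := by
  unfold poisson
  rw [Fin.sum_univ_three]
  have hj : j = 0 ∨ j = 1 ∨ j = 2 := by fin_cases j <;> simp
  have hk : k = 0 ∨ k = 1 ∨ k = 2 := by fin_cases k <;> simp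
  rcases hj with rfl | rfl | rfl <;> rcases hk with rfl | rfl | rfl <;>
    simp only [pdx_0_0, pdx_0_1, pdx_0_2, pdx_1_0, pdx_1_1, pdx_1_2, pdx_2_0, pdx_2_1, pdx_2_2, pdy_0_0, pdy_0_1, pdy_0_2, pdy_1_0, pdy_1_1, pdy_1_2, pdy_2_0, pdy_2_1, pdy_2_2] <;> ring
end

section
/- Let μ₁, μ₂, μ₃ : ℂ³ → ℝ be as defined. At a point z = (z₁, z₂, z₃) ∈ ℂ³, the three gradient vectors ∇μ₁(z), ∇μ₂(z), ∇μ₃(z) ∈ ℝ⁶ are linearly independent (equivalently, the real derivative D(μ₁, μ₂, μ₃)_z : ℝ⁶ → ℝ³ is surjective) if and only if (z₁, z₂) ≠ (0, 0). -/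
open Complex

/-- The gradient of `f` at `(x, y)`, as an element of `ℝ³ × ℝ³ ≅ ℝ⁶`. -/
noncomputable def grad (f : (Fin 3 → ℝ) → (Fin 3 → ℝ) → ℝ)
    (x y : Fin 3 → ℝ) : (Fin 3 → ℝ) × (Fin 3 → ℝ) :=
  (fun k => pdx f k x y, fun k => pdy f k x y)

lemma grad_mu0 (x y : Fin 3 → ℝ) : grad (mu 0) x y = (![-x 0, 0, 1], ![-y 0, 0, 0]) := by
  unfold grad pdx pdy mu
  ext k <;> fin_cases k <;> simp [Function.update]

lemma grad_mu1 (x y : Fin 3 → ℝ) : grad (mu 1) x y = (![0, -x 1, 1], ![0, -y 1, 0]) := by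
  unfold grad pdx pdy mu
  ext k <;> fin_cases k <;> simp [Function.update]

lemma deriv_aff (A B t : ℝ) (f : ℝ → ℝ) (h : ∀ s, f s = A * s + B) : deriv f t = A := by
  have : f = fun s => A * s + B := funext h
  rw [this]; simp

lemma grad_mu2 (x y : Fin 3 → ℝ) : grad (mu 2) x y =
    (![Real.exp (x 2) * (y 1 * Real.cos (y 2) + x 1 * Real.sin (y 2)),
       Real.exp (x 2) * (y 0 * Real.cos (y 2) + x 0 * Real.sin (y 2)),
       Real.exp (x 2) * ((x 0 * y 1 + x 1 * y 0) * Real.cos (y 2)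
          + (x 0 * x 1 - y 0 * y 1) * Real.sin (y 2))],
     ![Real.exp (x 2) * (x 1 * Real.cos (y 2) - y 1 * Real.sin (y 2)),
       Real.exp (x 2) * (x 0 * Real.cos (y 2) - y 0 * Real.sin (y 2)),
       Real.exp (x 2) * ((x 0 * y 1 + x 1 * y 0) * (-Real.sin (y 2))
          + (x 0 * x 1 - y 0 * y 1) * Real.cos (y 2))]) := by
  unfold grad pdx pdy mu
  ext k <;> fin_cases k
  · simp [Function.update]
    apply deriv_aff _ (x 1 * y 0 * Real.cos (y 2) - y 0 * y 1 * Real.sin (y 2))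
    intro s; ring
  · simp [Function.update]
    apply deriv_aff _ (x 0 * y 1 * Real.cos (y 2) - y 0 * y 1 * Real.sin (y 2))
    intro s; ring
  · simp [Function.update]
  · simp [Function.update]
    apply deriv_aff _ (x 0 * y 1 * Real.cos (y 2) + x 0 * x 1 * Real.sin (y 2))
    intro s; ring
  · simp [Function.update]
    apply deriv_aff _ (x 1 * y 0 * Real.cos (y 2) + x 0 * x 1 * Real.sin (y 2))
    intro s; ring
  · simp [Function.update]

/-- The gradients `∇μ₁, ∇μ₂, ∇μ₃ ∈ ℝ⁶` are linearly independent at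
`z = (z₁, z₂, z₃)` (equivalently `D(μ₁,μ₂,μ₃)` is surjective there) if and only if
`(z₁, z₂) ≠ (0, 0)`. -/
theorem gradients_linearly_independent_iff (x y : Fin 3 → ℝ) :
    LinearIndependent ℝ ![grad (mu 0) x y, grad (mu 1) x y, grad (mu 2) x y] ↔
      (((x 0 : ℂ) + (y 0 : ℂ) * Complex.I, (x 1 : ℂ) + (y 1 : ℂ) * Complex.I)
        ≠ ((0 : ℂ), (0 : ℂ))) := by
  have hne : (((x 0 : ℂ) + (y 0 : ℂ) * Complex.I, (x 1 : ℂ) + (y 1 : ℂ) * Complex.I)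
        ≠ ((0 : ℂ), (0 : ℂ))) ↔ ¬ ((x 0 = 0 ∧ y 0 = 0) ∧ (x 1 = 0 ∧ y 1 = 0)) := by
    simp [Complex.ext_iff]
  rw [hne, grad_mu0, grad_mu1, grad_mu2, Fintype.linearIndependent_iff]
  constructor
  · rintro h ⟨⟨h1, h2⟩, h3, h4⟩
    have := h ![0, 0, 1] (by
      simp [Fin.sum_univ_three, h1, h2, h3, h4]) 2
    simp at this
  · intro h g hg
    rw [Fin.sum_univ_three] at hg
    have e1 := congrFun (congrArg Prod.fst hg) 0
    have e2 := congrFun (congrArg Prod.fst hg) 1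
    have e3 := congrFun (congrArg Prod.fst hg) 2
    have e4 := congrFun (congrArg Prod.snd hg) 0
    have e5 := congrFun (congrArg Prod.snd hg) 1
    clear hg hne
    simp at e1 e2 e3 e4 e5
    have hcs := Real.sin_sq_add_cos_sq (y 2)
    have hE := Real.exp_pos (x 2)
    generalize Real.exp (x 2) = E at *
    generalize Real.cos (y 2) = C at *
    generalize Real.sin (y 2) = S at *
    have hr : 0 < (x 0 ^ 2 + y 0 ^ 2) + (x 1 ^ 2 + y 1 ^ 2) := by
      by_contra hn
      apply h
      refine ⟨⟨?_, ?_⟩, ?_, ?_⟩ <;> nlinarith [sq_nonneg (x 0), sq_nonneg (x 1), sq_nonneg (y 0), sq_nonneg (y 1)]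
    have f1 : g 0 + g 1 + g 0 * (x 0 ^ 2 + y 0 ^ 2) = 0 := by
      linear_combination e3 - x 0 * e1 - y 0 * e4
    have f2 : g 0 + g 1 + g 1 * (x 1 ^ 2 + y 1 ^ 2) = 0 := by
      linear_combination e3 - x 1 * e2 - y 1 * e5
    have hp : 0 < (x 0 ^ 2 + y 0 ^ 2) + (x 1 ^ 2 + y 1 ^ 2)
        + (x 0 ^ 2 + y 0 ^ 2) * (x 1 ^ 2 + y 1 ^ 2) := by positivity
    have a0 : g 0 = 0 := by
      refine (mul_eq_zero.mp (?_ : g 0 * ((x 0 ^ 2 + y 0 ^ 2) + (x 1 ^ 2 + y 1 ^ 2)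
        + (x 0 ^ 2 + y 0 ^ 2) * (x 1 ^ 2 + y 1 ^ 2)) = 0)).resolve_right hp.ne'
      linear_combination (1 + (x 1 ^ 2 + y 1 ^ 2)) * f1 - f2
    have b0 : g 1 = 0 := by
      rw [a0] at f1; linarith
    rw [a0] at e1 e4
    rw [b0] at e2 e5
    have c0 : g 2 = 0 := by
      have hq : (g 2 * E) ^ 2 * ((x 0 ^ 2 + y 0 ^ 2) + (x 1 ^ 2 + y 1 ^ 2)) = 0 := by
        have q1 : g 2 * (E * (y 1 * C + x 1 * S)) = 0 := by linarith
        have q2 : g 2 * (E * (y 0 * C + x 0 * S)) = 0 := by linarith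
        have q3 : g 2 * (E * (x 1 * C - y 1 * S)) = 0 := by linarith
        have q4 : g 2 * (E * (x 0 * C - y 0 * S)) = 0 := by linarith
        linear_combination (g 2 * (E * (y 1 * C + x 1 * S))) * q1
          + (g 2 * (E * (y 0 * C + x 0 * S))) * q2
          + (g 2 * (E * (x 1 * C - y 1 * S))) * q3
          + (g 2 * (E * (x 0 * C - y 0 * S))) * q4
          - (g 2 * E) ^ 2 * ((x 0 ^ 2 + y 0 ^ 2) + (x 1 ^ 2 + y 1 ^ 2)) * hcs
      have := (mul_eq_zero.mp hq).resolve_right hr.ne'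
      have := pow_eq_zero_iff (two_ne_zero) |>.mp this
      exact (mul_eq_zero.mp this).resolve_right hE.ne'
    intro i
    fin_cases i
    · exact a0
    · exact b0
    · exact c0
end
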